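/- arXiv:2603.28974 — 4 statements merged into one kernel-verified Lean document; each statement's English description precedes it below -/
import Mathlib

section
/- For every integer k ≥ 1 and all reals λ > 0 and g > 0, ∫₀^{g} f_K(k, λ, u) du = 1 − (2/(k−1)!)·(g/λ)^{k/2}·K(k, 2·√(g/λ)). -/
open MeasureTheory Real Set

/-- Modified Bessel function of the second kind of integer order, via its
integral representation `K(ν, x) = ∫₀^∞ exp(−x·cosh t)·cosh(ν·t) dt`. -/
noncomputable def besselK (ν : ℕ) (x : ℝ) : ℝ :=
  ∫ t in Set.Ioi (0 : ℝ), Real.exp (-(x * Real.cosh t)) * Real.cosh ((ν : ℝ) * t)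

/-- The K-distribution density with shape `k` and scale `λ`:
`f_K(k, λ, g) = (2·λ^{−(k+1)/2}/(k−1)!)·g^{(k−1)/2}·K(k−1, 2·√(g/λ))`. -/
noncomputable def fK (k : ℕ) (lam g : ℝ) : ℝ :=
  2 * lam ^ (-((k : ℝ) + 1) / 2) / (Nat.factorial (k - 1) : ℝ) *
    g ^ (((k : ℝ) - 1) / 2) * besselK (k - 1) (2 * Real.sqrt (g / lam))

/-!
A variable with density `f_K` is the product of an exponential variable of mean `λ` and an
independent Gamma variable `X` of shape `k`, so its distribution function at `g` is
`1 - E[exp (-g / (λ X))]`. Analytically, put `Γ_s(p) = ∫₀^∞ x ^ (p - 1) exp (-x - s / x) dx`. Then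
`f_K` is a rescaled `Γ_s(k - 1)`, integrating the exponential in `s` under the integral sign raises
`p` by one, and the substitution `x = √s exp t` folded at `t = 0` gives
`Γ_s(n) = 2 s ^ (n / 2) K(n, 2 √s)`.
-/

/-- The integrand of the extended Gamma function `Γ_s(p)`, as a function of `x > 0`. The factors are
ordered as in `Real.GammaIntegral_convergent`, the case `s = 0`. -/
noncomputable def extendedGammaIntegrand (p s x : ℝ) : ℝ :=
  exp (-x) * x ^ (p - 1) * exp (-(s / x))

/-- The extended Gamma function `Γ_s(p)` of Chaudhry and Zubair. It interpolates between the Gamma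
function (`s = 0`) and the Bessel functions `K`, and is closed under integration in `s`. -/
noncomputable def extendedGamma (p s : ℝ) : ℝ :=
  ∫ x in Ioi 0, extendedGammaIntegrand p s x

section ChangeOfVariables

variable {E : Type*} [NormedAddCommGroup E] {a : ℝ}

lemma image_univ_const_mul_exp (ha : 0 < a) : (fun t ↦ a * exp t) '' univ = Ioi 0 := by
  rw [← image_image (a * ·) exp, image_univ, range_exp, image_const_mul_Ioi_zero ha]

variable [NormedSpace ℝ E]

lemma integral_Ioi_zero_eq_integral_mul_exp (ha : 0 < a) (f : ℝ → E) :
    ∫ x in Ioi 0, f x = ∫ t, (a * exp t) • f (a * exp t) := by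
  rw [← image_univ_const_mul_exp ha, integral_image_eq_integral_deriv_smul_of_monotoneOn .univ
    (fun t _ ↦ ((hasDerivAt_exp t).const_mul a).hasDerivWithinAt)
    ((exp_monotone.const_mul ha.le).monotoneOn _), setIntegral_univ]

lemma integrableOn_Ioi_zero_iff_integrable_mul_exp (ha : 0 < a) (f : ℝ → E) :
    IntegrableOn f (Ioi 0) ↔ Integrable fun t ↦ (a * exp t) • f (a * exp t) := by
  rw [← image_univ_const_mul_exp ha, integrableOn_image_iff_integrableOn_deriv_smul_of_monotoneOn
    .univ (fun t _ ↦ ((hasDerivAt_exp t).const_mul a).hasDerivWithinAt)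
    ((exp_monotone.const_mul ha.le).monotoneOn _), integrableOn_univ]

lemma integral_eq_integral_Ioi_add_comp_neg {f : ℝ → E} (hf : Integrable f) :
    ∫ t, f t = ∫ t in Ioi 0, (f t + f (-t)) := by
  rw [integral_add hf.integrableOn hf.comp_neg.integrableOn, integral_comp_neg_Ioi, neg_zero,
    add_comm, intervalIntegral.integral_Iic_add_Ioi hf.integrableOn hf.integrableOn]

end ChangeOfVariables

section Integrability

variable {p s x : ℝ}

lemma measurable_extendedGammaIntegrand :
    Measurable fun y : ℝ × ℝ ↦ extendedGammaIntegrand p y.1 y.2 := by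
  unfold extendedGammaIntegrand
  fun_prop

lemma continuous_extendedGammaIntegrand_left :
    Continuous fun s ↦ extendedGammaIntegrand p s x := by
  unfold extendedGammaIntegrand
  fun_prop

lemma extendedGammaIntegrand_nonneg (hx : 0 ≤ x) : 0 ≤ extendedGammaIntegrand p s x := by
  unfold extendedGammaIntegrand
  positivity

lemma extendedGamma_zero_right (hp : 0 < p) : extendedGamma p 0 = Gamma p := by
  simp only [extendedGamma, extendedGammaIntegrand, zero_div, neg_zero, exp_zero, mul_one,
    Gamma_eq_integral hp]

lemma exp_neg_div_le (hs : 0 < s) (hx : 0 < x) (n : ℕ) :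
    exp (-(s / x)) ≤ n.factorial / s ^ n * x ^ n := by
  rw [exp_neg, inv_le_comm₀ (exp_pos _) (by positivity)]
  calc (n.factorial / s ^ n * x ^ n)⁻¹ = (s / x) ^ n / n.factorial := by
        rw [div_pow]; field_simp
    _ ≤ exp (s / x) := pow_div_factorial_le_exp _ (by positivity) n

lemma integrableOn_extendedGammaIntegrand_of_le {q C : ℝ} (hq : 0 < q)
    (h : ∀ x > 0, extendedGammaIntegrand p s x ≤ C * (exp (-x) * x ^ (q - 1))) :
    IntegrableOn (extendedGammaIntegrand p s) (Ioi 0) := by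
  refine ((GammaIntegral_convergent hq).const_mul C).mono'
    (measurable_extendedGammaIntegrand.comp measurable_prodMk_left).aestronglyMeasurable ?_
  filter_upwards [ae_restrict_mem measurableSet_Ioi] with x hx
  rw [norm_of_nonneg (extendedGammaIntegrand_nonneg (le_of_lt hx))]
  exact h x hx

lemma integrableOn_extendedGammaIntegrand_of_nonneg (hp : 0 < p) (hs : 0 ≤ s) :
    IntegrableOn (extendedGammaIntegrand p s) (Ioi 0) := by
  refine integrableOn_extendedGammaIntegrand_of_le (C := 1) hp fun x hx ↦ ?_
  rw [one_mul]
  exact mul_le_of_le_one_right (by positivity) (exp_le_one_iff.2 (neg_nonpos.2 (by positivity)))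

lemma integrableOn_extendedGammaIntegrand (p : ℝ) (hs : 0 < s) :
    IntegrableOn (extendedGammaIntegrand p s) (Ioi 0) := by
  -- `exp (-(s / x))` vanishes at `0` faster than any power, so it absorbs the singularity of
  -- `x ^ (p - 1)`.
  obtain ⟨n, hn⟩ := exists_nat_gt (-p)
  refine integrableOn_extendedGammaIntegrand_of_le (q := p + n) (C := n.factorial / s ^ n)
    (by linarith) fun x hx ↦ ?_
  calc extendedGammaIntegrand p s x
      ≤ exp (-x) * x ^ (p - 1) * (n.factorial / s ^ n * x ^ n) :=
        mul_le_mul_of_nonneg_left (exp_neg_div_le hs hx n) (by positivity)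
    _ = n.factorial / s ^ n * (exp (-x) * x ^ (p + n - 1)) := by
        rw [add_sub_right_comm, rpow_add_natCast hx.ne']
        ring

end Integrability

section Bessel

variable {a : ℝ}

lemma mul_exp_mul_extendedGammaIntegrand (ha : 0 < a) (p t : ℝ) :
    a * exp t * extendedGammaIntegrand p (a ^ 2) (a * exp t) =
      a ^ p * (exp (-(2 * a * cosh t)) * exp (p * t)) := by
  have h_pow : a * exp t * (a * exp t) ^ (p - 1) = a ^ p * exp (p * t) := by
    rw [rpow_sub_one (by positivity), mul_div_cancel₀ _ (by positivity),
      mul_rpow ha.le (exp_pos t).le, ← exp_mul, mul_comm t]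
  have h_div : a ^ 2 / (a * exp t) = a * exp (-t) := by
    rw [exp_neg]
    field_simp
  have h_exp : exp (-(a * exp t)) * exp (-(a * exp (-t))) = exp (-(2 * a * cosh t)) := by
    rw [← exp_add, cosh_eq]
    ring_nf
  rw [extendedGammaIntegrand, h_div, ← h_exp]
  linear_combination exp (-(a * exp t)) * exp (-(a * exp (-t))) * h_pow

lemma integrable_exp_neg_mul_cosh_mul_exp (ha : 0 < a) (p : ℝ) :
    Integrable fun t ↦ exp (-(2 * a * cosh t)) * exp (p * t) := by
  have h := (integrableOn_Ioi_zero_iff_integrable_mul_exp ha _).1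
    (integrableOn_extendedGammaIntegrand p (sq_pos_of_pos ha))
  simp only [smul_eq_mul, mul_exp_mul_extendedGammaIntegrand ha] at h
  exact (integrable_const_mul_iff (rpow_pos_of_pos ha p).ne'.isUnit _).1 h

lemma extendedGamma_sq (ha : 0 < a) (p : ℝ) :
    extendedGamma p (a ^ 2) =
      2 * a ^ p * ∫ t in Ioi 0, exp (-(2 * a * cosh t)) * cosh (p * t) := by
  have h_even (t : ℝ) :
      exp (-(2 * a * cosh t)) * exp (p * t) + exp (-(2 * a * cosh (-t))) * exp (p * -t) =
        2 * (exp (-(2 * a * cosh t)) * cosh (p * t)) := by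
    rw [cosh_neg, cosh_eq (p * t), mul_neg]
    ring
  calc extendedGamma p (a ^ 2)
      = a ^ p * ∫ t, exp (-(2 * a * cosh t)) * exp (p * t) := by
        simp only [extendedGamma, integral_Ioi_zero_eq_integral_mul_exp ha, smul_eq_mul,
          mul_exp_mul_extendedGammaIntegrand ha, integral_const_mul]
    _ = 2 * a ^ p * ∫ t in Ioi 0, exp (-(2 * a * cosh t)) * cosh (p * t) := by
        rw [integral_eq_integral_Ioi_add_comp_neg (integrable_exp_neg_mul_cosh_mul_exp ha p)]
        simp only [h_even, integral_const_mul]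
        ring

lemma extendedGamma_natCast (n : ℕ) {s : ℝ} (hs : 0 < s) :
    extendedGamma n s = 2 * s ^ ((n : ℝ) / 2) * besselK n (2 * √s) := by
  have h := extendedGamma_sq (sqrt_pos.2 hs) n
  rwa [sq_sqrt hs.le, ← rpow_div_two_eq_sqrt _ hs.le] at h

end Bessel

section IntegrationInScale

variable {p a b x : ℝ}

lemma integral_extendedGammaIntegrand (hx : 0 < x) :
    ∫ s in a..b, extendedGammaIntegrand p s x =
      extendedGammaIntegrand (p + 1) a x - extendedGammaIntegrand (p + 1) b x := by
  have h_deriv (s : ℝ) : HasDerivAt (fun s ↦ -extendedGammaIntegrand (p + 1) s x)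
      (extendedGammaIntegrand p s x) s := by
    have h := (((hasDerivAt_id s).div_const x).fun_neg.exp.const_mul
      (exp (-x) * x ^ (p + 1 - 1))).fun_neg
    refine h.congr_deriv ?_
    rw [extendedGammaIntegrand, add_sub_cancel_right, rpow_sub_one hx.ne', id]
    ring
  rw [intervalIntegral.integral_eq_sub_of_hasDerivAt (fun s _ ↦ h_deriv s)
    (continuous_extendedGammaIntegrand_left.intervalIntegrable a b), neg_sub_neg]

lemma integrable_uncurry_extendedGammaIntegrand (hp : -1 < p) (ha : 0 ≤ a) (hab : a ≤ b) :
    Integrable (fun y : ℝ × ℝ ↦ extendedGammaIntegrand p y.1 y.2)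
      ((volume.restrict (Ioc a b)).prod (volume.restrict (Ioi 0))) := by
  rw [integrable_prod_iff' measurable_extendedGammaIntegrand.aestronglyMeasurable]
  refine ⟨.of_forall fun x ↦ continuous_extendedGammaIntegrand_left.integrableOn_Ioc, ?_⟩
  have h_int (s : ℝ) (hs : 0 ≤ s) : IntegrableOn (extendedGammaIntegrand (p + 1) s) (Ioi 0) :=
    integrableOn_extendedGammaIntegrand_of_nonneg (by linarith) hs
  refine ((h_int a ha).sub (h_int b (ha.trans hab))).congr ?_
  filter_upwards [ae_restrict_mem measurableSet_Ioi] with x hx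
  simp only [norm_of_nonneg (extendedGammaIntegrand_nonneg (le_of_lt hx)), Pi.sub_apply,
    ← intervalIntegral.integral_of_le hab, integral_extendedGammaIntegrand hx]

lemma integral_extendedGamma (hp : -1 < p) (ha : 0 ≤ a) (hab : a ≤ b) :
    ∫ s in a..b, extendedGamma p s = extendedGamma (p + 1) a - extendedGamma (p + 1) b := by
  have h_int (s : ℝ) (hs : 0 ≤ s) : IntegrableOn (extendedGammaIntegrand (p + 1) s) (Ioi 0) :=
    integrableOn_extendedGammaIntegrand_of_nonneg (by linarith) hs
  calc ∫ s in a..b, extendedGamma p s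
      = ∫ x in Ioi 0, ∫ s in a..b, extendedGammaIntegrand p s x := by
        simp only [intervalIntegral.integral_of_le hab]
        exact integral_integral_swap (integrable_uncurry_extendedGammaIntegrand hp ha hab)
    _ = ∫ x in Ioi 0,
          (extendedGammaIntegrand (p + 1) a x - extendedGammaIntegrand (p + 1) b x) :=
        setIntegral_congr_fun measurableSet_Ioi fun x hx ↦ integral_extendedGammaIntegrand hx
    _ = extendedGamma (p + 1) a - extendedGamma (p + 1) b :=
        integral_sub (h_int a ha) (h_int b (ha.trans hab))

end IntegrationInScale

lemma fK_succ_eq_extendedGamma (m : ℕ) {lam u : ℝ} (hlam : 0 < lam) (hu : 0 < u) :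
    fK (m + 1) lam u = (m.factorial : ℝ)⁻¹ * (lam⁻¹ * extendedGamma m (u / lam)) := by
  have h_lam : lam ^ (-(((m + 1 : ℕ) : ℝ) + 1) / 2) = (lam ^ ((m : ℝ) / 2))⁻¹ * lam⁻¹ := by
    rw [← rpow_neg hlam.le, ← rpow_neg_one lam, ← rpow_add hlam]
    push_cast
    ring_nf
  rw [fK, h_lam, extendedGamma_natCast m (div_pos hu hlam), div_rpow hu.le hlam.le,
    Nat.cast_succ, add_sub_cancel_right, Nat.add_sub_cancel]
  ring

/-- Closed-form CDF of the K-distribution: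
`∫₀^g f_K(k, λ, u) du = 1 − (2/(k−1)!)·(g/λ)^{k/2}·K(k, 2·√(g/λ))`. -/
theorem fK_cdf (k : ℕ) (hk : 1 ≤ k) (lam g : ℝ) (hlam : 0 < lam) (hg : 0 < g) :
    ∫ u in Set.Ioc (0 : ℝ) g, fK k lam u =
      1 - 2 / (Nat.factorial (k - 1) : ℝ) *
        (g / lam) ^ ((k : ℝ) / 2) * besselK k (2 * Real.sqrt (g / lam)) := by
  obtain ⟨m, rfl⟩ := Nat.exists_eq_add_of_le' hk
  calc ∫ u in Ioc 0 g, fK (m + 1) lam u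
      = ∫ u in 0..g, (m.factorial : ℝ)⁻¹ * (lam⁻¹ * extendedGamma m (u / lam)) := by
        rw [intervalIntegral.integral_of_le hg.le]
        exact setIntegral_congr_fun measurableSet_Ioc fun u hu ↦
          fK_succ_eq_extendedGamma m hlam hu.1
    _ = (m.factorial : ℝ)⁻¹ * ∫ s in 0..g / lam, extendedGamma m s := by
        simp only [intervalIntegral.integral_const_mul,
          intervalIntegral.inv_mul_integral_comp_div, zero_div]
    _ = (m.factorial : ℝ)⁻¹ * (m.factorial - extendedGamma (m + 1 : ℕ) (g / lam)) := by
        rw [integral_extendedGamma (by linarith [m.cast_nonneg (α := ℝ)]) le_rfl (by positivity),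
          extendedGamma_zero_right (by positivity), Gamma_nat_eq_factorial, Nat.cast_succ]
    _ = _ := by
        rw [extendedGamma_natCast _ (div_pos hg hlam), mul_sub, inv_mul_cancel₀ (by positivity),
          Nat.add_sub_cancel]
        ring
end

section
/- For every integer k ≥ 1 and every real λ > 0, the K-distribution density integrates to one: ∫₀^∞ f_K(k, λ, g) dg = 1. -/
open MeasureTheory Real Set

open Filter Topology

/-!
Integrating the kernel `x ^ (s - 1) * exp (-(x * cosh t)) * cosh (ν * t)` in `x` first turns the
Mellin transform of `besselK ν` at `s` into `Gamma s` times `∫ cosh (ν * t) / cosh t ^ s`. At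
`s = ν + 2` the latter integrand has the elementary primitive
`sinh ((ν + 1) * t) / ((ν + 1) * cosh t ^ (ν + 1))`, and the substitution `x = 2 * √(g / λ)`
identifies the total mass of the K-distribution with this Mellin transform.
-/

theorem tendsto_sinh_mul_exp_neg_atTop :
    Tendsto (fun x : ℝ => sinh x * exp (-x)) atTop (𝓝 (1 / 2)) := by
  have h : Tendsto (fun x : ℝ => (1 - exp (-x) ^ 2) / 2) atTop (𝓝 ((1 - 0 ^ 2) / 2)) :=
    ((tendsto_exp_neg_atTop_nhds_zero.pow 2).const_sub 1).div_const 2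
  convert h using 2 with x
  · rw [sinh_eq, exp_neg]
    field_simp
  · norm_num

theorem tendsto_cosh_mul_exp_neg_atTop :
    Tendsto (fun x : ℝ => cosh x * exp (-x)) atTop (𝓝 (1 / 2)) := by
  have h : Tendsto (fun x : ℝ => (1 + exp (-x) ^ 2) / 2) atTop (𝓝 ((1 + 0 ^ 2) / 2)) :=
    ((tendsto_exp_neg_atTop_nhds_zero.pow 2).const_add 1).div_const 2
  convert h using 2 with x
  · rw [cosh_eq, exp_neg]
    field_simp
  · norm_num

theorem cosh_le_exp_abs (x : ℝ) : cosh x ≤ exp |x| := by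
  rw [cosh_eq]
  linarith [exp_le_exp.2 (le_abs_self x), exp_le_exp.2 (neg_le_abs x)]

theorem exp_div_two_le_cosh (x : ℝ) : exp x / 2 ≤ cosh x := by
  rw [cosh_eq]
  linarith [exp_pos (-x)]

theorem hasDerivAt_sinh_mul_div_cosh_rpow (a t : ℝ) :
    HasDerivAt (fun t : ℝ => sinh (a * t) / cosh t ^ a)
      (a * (cosh ((a - 1) * t) / cosh t ^ (a + 1))) t := by
  have hcosh : 0 < cosh t := cosh_pos t
  have hnum : HasDerivAt (fun t : ℝ => sinh (a * t)) (cosh (a * t) * (a * 1)) t :=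
    ((hasDerivAt_id t).const_mul a).sinh
  have hden : HasDerivAt (fun t : ℝ => cosh t ^ a) (sinh t * a * cosh t ^ (a - 1)) t :=
    (hasDerivAt_cosh t).rpow_const (Or.inl hcosh.ne')
  refine (hnum.div hden (rpow_pos_of_pos hcosh a).ne').congr_deriv ?_
  have hsub : cosh ((a - 1) * t) = cosh (a * t) * cosh t - sinh (a * t) * sinh t := by
    rw [← cosh_sub, sub_one_mul]
  rw [hsub, rpow_add_one hcosh.ne', rpow_sub_one hcosh.ne']
  field_simp

theorem tendsto_sinh_mul_div_cosh_rpow_atTop {a : ℝ} (ha : 0 < a) :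
    Tendsto (fun t : ℝ => sinh (a * t) / cosh t ^ a) atTop (𝓝 (2 ^ (a - 1))) := by
  have hnum : Tendsto (fun t : ℝ => sinh (a * t) * exp (-(a * t))) atTop (𝓝 (1 / 2)) :=
    tendsto_sinh_mul_exp_neg_atTop.comp (tendsto_id.const_mul_atTop ha)
  have hden : Tendsto (fun t : ℝ => (cosh t * exp (-t)) ^ a) atTop (𝓝 ((1 / 2) ^ a)) :=
    tendsto_cosh_mul_exp_neg_atTop.rpow_const (Or.inl (by norm_num))
  convert hnum.div hden (by positivity) using 2 with t
  · have hexp : exp (-t) ^ a = exp (-(a * t)) := by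
      rw [← exp_mul]
      ring_nf
    rw [Pi.div_apply, mul_rpow (cosh_pos t).le (exp_pos _).le, hexp,
      mul_div_mul_right _ _ (exp_pos _).ne']
  · rw [rpow_sub_one two_ne_zero, div_rpow zero_le_one zero_le_two, one_rpow]
    field_simp

theorem integrableOn_cosh_mul_div_cosh_rpow {ν s : ℝ} (hνs : |ν| < s) :
    IntegrableOn (fun t : ℝ => cosh (ν * t) / cosh t ^ s) (Ioi 0) := by
  have hs : 0 ≤ s := (abs_nonneg ν).trans hνs.le
  have hdom : IntegrableOn (fun t : ℝ => 2 ^ s * exp ((|ν| - s) * t)) (Ioi 0) :=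
    (integrableOn_exp_mul_Ioi (sub_neg.2 hνs) 0).const_mul _
  have hmeas : Measurable fun t : ℝ => cosh (ν * t) / cosh t ^ s := by fun_prop
  refine hdom.mono' hmeas.aestronglyMeasurable ?_
  filter_upwards [ae_restrict_mem measurableSet_Ioi] with t (ht : 0 < t)
  calc ‖cosh (ν * t) / cosh t ^ s‖
      = cosh (ν * t) / cosh t ^ s := norm_of_nonneg (by positivity)
    _ ≤ exp |ν * t| / (exp t / 2) ^ s := by
        gcongr
        · exact cosh_le_exp_abs _
        · exact exp_div_two_le_cosh t
    _ = 2 ^ s * exp ((|ν| - s) * t) := by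
        rw [div_rpow (exp_pos t).le zero_le_two, ← exp_mul, abs_mul, abs_of_pos ht, sub_mul,
          exp_sub, mul_comm t s]
        field_simp

theorem integral_cosh_mul_div_cosh_rpow {a : ℝ} (ha : 0 < a) :
    ∫ t in Ioi (0 : ℝ), cosh ((a - 1) * t) / cosh t ^ (a + 1) = 2 ^ (a - 1) / a := by
  have hint : IntegrableOn (fun t : ℝ => cosh ((a - 1) * t) / cosh t ^ (a + 1)) (Ioi 0) :=
    integrableOn_cosh_mul_div_cosh_rpow (abs_lt.2 ⟨by linarith, by linarith⟩)
  have hFTC := integral_Ioi_of_hasDerivAt_of_tendsto'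
    (fun t _ => hasDerivAt_sinh_mul_div_cosh_rpow a t) (hint.const_mul a)
    (tendsto_sinh_mul_div_cosh_rpow_atTop ha)
  rw [integral_const_mul, mul_zero, sinh_zero, zero_div, sub_zero] at hFTC
  rw [← hFTC, mul_div_cancel_left₀ _ ha.ne']

theorem integral_rpow_mul_exp_neg_mul_cosh {s : ℝ} (hs : 0 < s) (ν t : ℝ) :
    ∫ x in Ioi (0 : ℝ), x ^ (s - 1) * (exp (-(x * cosh t)) * cosh (ν * t)) =
      Gamma s * (cosh (ν * t) / cosh t ^ s) := by
  simp_rw [← mul_assoc, mul_comm _ (cosh t)]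
  rw [integral_mul_const, integral_rpow_mul_exp_neg_mul_Ioi hs (cosh_pos t),
    div_rpow zero_le_one (cosh_pos t).le, one_rpow]
  ring

theorem integrable_rpow_mul_exp_neg_mul_cosh {ν s : ℝ} (hνs : |ν| < s) :
    Integrable (fun p : ℝ × ℝ => p.1 ^ (s - 1) * (exp (-(p.1 * cosh p.2)) * cosh (ν * p.2)))
      ((volume.restrict (Ioi 0)).prod (volume.restrict (Ioi 0))) := by
  have hs : 0 < s := (abs_nonneg ν).trans_lt hνs
  have hmeas : Measurable fun p : ℝ × ℝ =>
      p.1 ^ (s - 1) * (exp (-(p.1 * cosh p.2)) * cosh (ν * p.2)) := by fun_prop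
  refine (integrable_prod_iff' hmeas.aestronglyMeasurable).2 ⟨.of_forall fun t => ?_, ?_⟩
  · have h := integrableOn_rpow_mul_exp_neg_mul_rpow (s := s - 1) (by linarith) one_pos
      (cosh_pos t)
    simpa only [rpow_one, neg_mul, mul_comm (cosh t), mul_assoc] using h.mul_const (cosh (ν * t))
  · have hnorm (t : ℝ) : ∫ x in Ioi (0 : ℝ),
        ‖x ^ (s - 1) * (exp (-(x * cosh t)) * cosh (ν * t))‖ =
          Gamma s * (cosh (ν * t) / cosh t ^ s) := by
      rw [← integral_rpow_mul_exp_neg_mul_cosh hs]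
      refine setIntegral_congr_fun measurableSet_Ioi fun x (hx : 0 < x) => norm_of_nonneg ?_
      positivity
    simp_rw [hnorm]
    exact (integrableOn_cosh_mul_div_cosh_rpow hνs).const_mul _

theorem integral_rpow_mul_besselK {ν : ℕ} {s : ℝ} (hνs : ν < s) :
    ∫ x in Ioi (0 : ℝ), x ^ (s - 1) * besselK ν x =
      Gamma s * ∫ t in Ioi (0 : ℝ), cosh (ν * t) / cosh t ^ s := by
  have hs : 0 < s := ν.cast_nonneg.trans_lt hνs
  simp_rw [besselK, ← integral_const_mul]
  rw [integral_integral_swap (integrable_rpow_mul_exp_neg_mul_cosh (by rwa [Nat.abs_cast]))]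
  simp_rw [integral_rpow_mul_exp_neg_mul_cosh hs]

theorem integral_pow_succ_mul_besselK (ν : ℕ) :
    ∫ x in Ioi (0 : ℝ), x ^ (ν + 1) * besselK ν x = 2 ^ ν * ν.factorial := by
  have hcosh := integral_cosh_mul_div_cosh_rpow (a := ν + 1) (by positivity)
  rw [add_sub_cancel_right, add_assoc, one_add_one_eq_two, rpow_natCast] at hcosh
  have hmellin := integral_rpow_mul_besselK (ν := ν) (s := ν + 2) (by linarith)
  have hexponent : (ν : ℝ) + 2 - 1 = (ν + 1 : ℕ) := by push_cast; ring
  have hGamma : Gamma ((ν : ℝ) + 2) = (ν + 1).factorial := by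
    rw [← Gamma_nat_eq_factorial]
    push_cast
    ring_nf
  simp_rw [hexponent, rpow_natCast] at hmellin
  rw [hmellin, hcosh, hGamma, Nat.factorial_succ]
  push_cast
  field_simp

theorem integral_Ioi_comp_sqrt_mul {E : Type*} [NormedAddCommGroup E] [NormedSpace ℝ E]
    (F : ℝ → E) {c : ℝ} (hc : 0 < c) :
    ∫ x in Ioi (0 : ℝ), F √(c * x) = (2 / c) • ∫ y in Ioi (0 : ℝ), y • F y := by
  have hsqrt : ∫ x in Ioi (0 : ℝ), F √x = (2 : ℝ) • ∫ y in Ioi (0 : ℝ), y • F y := by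
    rw [← integral_comp_rpow_Ioi_of_pos (g := fun x => F √x) two_pos, ← integral_smul]
    refine setIntegral_congr_fun measurableSet_Ioi fun y (hy : 0 < y) => ?_
    norm_num [sqrt_sq hy.le, mul_smul]
  rw [integral_comp_mul_left_Ioi (fun x => F √x) 0 hc, mul_zero, hsqrt, smul_smul,
    inv_mul_eq_div]

theorem fK_succ_eq_besselK_sqrt (n : ℕ) {lam g : ℝ} (hlam : 0 < lam) (hg : 0 ≤ g) :
    fK (n + 1) lam g = 2 / (lam * 2 ^ n * n.factorial) *
      (√(4 / lam * g) ^ n * besselK n √(4 / lam * g)) := by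
  have hsqrt : √(4 / lam * g) = 2 * √(g / lam) := by
    rw [div_mul_eq_mul_div, mul_div_assoc, sqrt_mul zero_le_four]
    norm_num
  have hg_pow : g ^ ((n : ℝ) / 2) = √g ^ n := by
    rw [sqrt_eq_rpow, ← rpow_mul_natCast hg, one_div_mul_eq_div]
  have hlam_pow : lam ^ (-((n : ℝ) + 1 + 1) / 2) = (lam * √lam ^ n)⁻¹ := by
    rw [sqrt_eq_rpow, ← rpow_mul_natCast hlam.le, one_div_mul_eq_div, ← rpow_one_add' hlam.le,
      ← rpow_neg hlam.le]
    · ring_nf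
    · positivity
  rw [hsqrt, fK, Nat.add_sub_cancel, Nat.cast_succ, add_sub_cancel_right, hg_pow, hlam_pow,
    sqrt_div hg, ← mul_div_assoc, div_pow, mul_pow]
  field_simp

/-- The K-distribution density integrates to one: `∫₀^∞ f_K(k, λ, g) dg = 1`. -/
theorem fK_integral_eq_one (k : ℕ) (hk : 1 ≤ k) (lam : ℝ) (hlam : 0 < lam) :
    ∫ g in Set.Ioi (0 : ℝ), fK k lam g = 1 := by
  obtain ⟨n, rfl⟩ := Nat.exists_eq_add_of_le' hk
  calc ∫ g in Ioi (0 : ℝ), fK (n + 1) lam g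
      = ∫ g in Ioi (0 : ℝ), 2 / (lam * 2 ^ n * n.factorial) *
          (√(4 / lam * g) ^ n * besselK n √(4 / lam * g)) :=
        setIntegral_congr_fun measurableSet_Ioi fun g (hg : 0 < g) =>
          fK_succ_eq_besselK_sqrt n hlam hg.le
    _ = 2 / (lam * 2 ^ n * n.factorial) *
          (2 / (4 / lam) * ∫ x in Ioi (0 : ℝ), x ^ (n + 1) * besselK n x) := by
        rw [integral_const_mul, integral_Ioi_comp_sqrt_mul (fun x => x ^ n * besselK n x)
          (by positivity)]
        simp only [smul_eq_mul, ← mul_assoc, ← pow_succ']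
    _ = 1 := by
        rw [integral_pow_succ_mul_besselK]
        field_simp
        norm_num
end

section
/- Let m ≥ 1 be an integer and λ > 0 a real. Let T and E be independent real random variables, where T has the Gamma distribution with shape m and scale λ, and E is exponentially distributed with rate 1. Then for every real R > 0, P(T·E ≤ R) = 1 − (2/(m−1)!)·(R/λ)^{m/2}·K(m, 2·√(R/λ)). -/
open MeasureTheory Real Set ProbabilityTheory

/-- The Gamma distribution with (positive integer) shape `m` and scale `lam`, i.e. the
measure on `ℝ` with density `t^{m−1}·exp(−t/λ)/(λ^m·(m−1)!)` for `t ≥ 0`. -/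
noncomputable def gammaScaleMeasure (m : ℕ) (lam : ℝ) : Measure ℝ :=
  volume.withDensity fun t =>
    ENNReal.ofReal (if 0 ≤ t then t ^ (m - 1) * Real.exp (-t / lam) /
      (lam ^ m * (Nat.factorial (m - 1) : ℝ)) else 0)

/-- The exponential distribution with rate `r`, i.e. the measure on `ℝ` with density
`r·exp(−r·t)` for `t ≥ 0`. -/
noncomputable def expDist (r : ℝ) : Measure ℝ :=
  volume.withDensity fun t => ENNReal.ofReal (if 0 ≤ t then r * Real.exp (-(r * t)) else 0)

/-!
Conditionally on `T = t > 0` the event `R < T * E` has probability `exp (-(r * R / t))`, so the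
tail of `T * E` is the integral of this function against the Gamma density. The integrand is
`t ^ (a - 1) * exp (-(b * t + r * R / t))` up to a constant; the scaling that balances the two
terms of the exponent followed by `t = exp u` turns that exponent into a multiple of `cosh u`,
and the part of `exp (a * u)` that is even in `u` is the integrand of the Bessel function.
-/

/-- The modified Bessel function of the second kind `K_ν(x)` of real order `ν`, given by the same
integral as `besselK`; it serves Gamma distributions of arbitrary real shape. -/
noncomputable def realBesselK (ν x : ℝ) : ℝ :=
  ∫ t in Ioi 0, exp (-(x * cosh t)) * cosh (ν * t)

lemma besselK_eq_realBesselK (ν : ℕ) (x : ℝ) : besselK ν x = realBesselK ν x := rfl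

lemma sq_div_two_le_cosh (u : ℝ) : u ^ 2 / 2 ≤ cosh u := by
  have half_le_sinh : (u / 2) ^ 2 ≤ sinh (u / 2) ^ 2 := by
    rw [sq_le_sq, abs_sinh]
    exact self_le_sinh_iff.2 (abs_nonneg _)
  have cosh_half_angle : cosh u = 1 + 2 * sinh (u / 2) ^ 2 := by
    rw [← mul_div_cancel₀ u (two_ne_zero' ℝ), cosh_two_mul, cosh_sq]
    ring_nf
  linarith

lemma integrable_exp_neg_mul_cosh_mul_exp_s10 (ν : ℝ) {x : ℝ} (hx : 0 < x) :
    Integrable fun u => exp (-(x * cosh u)) * exp (ν * u) := by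
  refine ((integrable_exp_neg_mul_sq (div_pos hx four_pos)).const_mul (exp (ν ^ 2 / x))).mono'
    (by fun_prop) (.of_forall fun u => ?_)
  have linear_le : ν * u ≤ ν ^ 2 / x + x / 4 * u ^ 2 := by
    have square : ν ^ 2 / x + x / 4 * u ^ 2 - ν * u = (ν - x * u / 2) ^ 2 / x := by
      field_simp
      ring
    have : 0 ≤ (ν - x * u / 2) ^ 2 / x := by positivity
    linarith
  have cosh_ge := mul_le_mul_of_nonneg_left (sq_div_two_le_cosh u) hx.le
  rw [norm_of_nonneg (by positivity), ← exp_add, ← exp_add, exp_le_exp]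
  linarith

lemma integral_exp_neg_mul_cosh_mul_exp (ν : ℝ) {x : ℝ} (hx : 0 < x) :
    ∫ u, exp (-(x * cosh u)) * exp (ν * u) = 2 * realBesselK ν x := by
  have integrable := integrable_exp_neg_mul_cosh_mul_exp_s10 ν hx
  have integral_neg := integral_neg_eq_self (fun u => exp (-(x * cosh u)) * exp (ν * u)) volume
  calc ∫ u, exp (-(x * cosh u)) * exp (ν * u)
      = ((∫ u, exp (-(x * cosh u)) * exp (ν * u)) +
          ∫ u, exp (-(x * cosh (-u))) * exp (ν * -u)) / 2 := by linarith
    _ = ∫ u, exp (-(x * cosh u)) * cosh (ν * u) := by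
        rw [← integral_add integrable integrable.comp_neg, ← integral_div]
        refine integral_congr_ae (.of_forall fun u => ?_)
        simp only [cosh_neg, mul_neg, cosh_eq (ν * u)]
        ring
    _ = ∫ u, exp (-(x * cosh |u|)) * cosh (ν * |u|) := by
        refine integral_congr_ae (.of_forall fun u => ?_)
        rcases abs_choice u with h | h <;> simp only [h, mul_neg, cosh_neg]
    _ = 2 * realBesselK ν x :=
        integral_comp_abs (f := fun u => exp (-(x * cosh u)) * cosh (ν * u))

lemma integral_comp_exp {F : Type*} [NormedAddCommGroup F] [NormedSpace ℝ F] (g : ℝ → F) :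
    ∫ u, exp u • g (exp u) = ∫ t in Ioi 0, g t := by
  rw [← range_exp, ← image_univ]
  simpa [abs_of_pos (exp_pos _)] using (integral_image_eq_integral_abs_deriv_smul .univ
    (fun u _ => (hasDerivAt_exp u).hasDerivWithinAt) exp_injective.injOn g).symm

lemma integral_rpow_mul_exp_neg_add_inv (ν : ℝ) {x : ℝ} (hx : 0 < x) :
    ∫ t in Ioi 0, t ^ (ν - 1) * exp (-(x * (t + t⁻¹))) = 2 * realBesselK ν (2 * x) := by
  rw [← integral_comp_exp, ← integral_exp_neg_mul_cosh_mul_exp ν (mul_pos two_pos hx)]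
  refine integral_congr_ae (.of_forall fun u => ?_)
  have weight : exp u * exp u ^ (ν - 1) = exp (ν * u) := by
    rw [← exp_mul, ← exp_add]
    ring_nf
  have exponent : x * (exp u + (exp u)⁻¹) = 2 * x * cosh u := by
    rw [cosh_eq, ← exp_neg]
    ring
  simp only [smul_eq_mul]
  rw [← mul_assoc, weight, exponent, mul_comm]

lemma integral_rpow_mul_exp_neg_add_div (ν : ℝ) {a b : ℝ} (ha : 0 < a) (hb : 0 < b) :
    ∫ t in Ioi 0, t ^ (ν - 1) * exp (-(a * t + b / t)) =
      2 * (b / a) ^ (ν / 2) * realBesselK ν (2 * √(a * b)) := by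
  have ratio_pos : 0 < b / a := div_pos hb ha
  have scale_rpow : √(b / a) ^ ν = (b / a) ^ (ν / 2) := by
    rw [sqrt_eq_rpow, ← rpow_mul ratio_pos.le]
    ring_nf
  have scale_pos : 0 < √(b / a) := sqrt_pos.2 ratio_pos
  have mul_scale : a * √(b / a) = √(a * b) := by
    rw [← sqrt_sq ha.le, ← sqrt_mul (sq_nonneg a), sqrt_sq ha.le]
    congr 1
    field_simp
  have div_scale : b / √(b / a) = √(a * b) := by
    rw [← mul_scale, div_eq_iff scale_pos.ne', mul_assoc, mul_self_sqrt ratio_pos.le]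
    field_simp
  set c := √(b / a)
  calc ∫ t in Ioi 0, t ^ (ν - 1) * exp (-(a * t + b / t))
      = c * ∫ t in Ioi 0, (c * t) ^ (ν - 1) * exp (-(a * (c * t) + b / (c * t))) := by
        simpa only [smul_eq_mul, mul_zero] using (integral_comp_mul_left_Ioi'
          (fun t => t ^ (ν - 1) * exp (-(a * t + b / t))) 0 scale_pos).symm
    _ = c ^ ν * ∫ t in Ioi 0, t ^ (ν - 1) * exp (-(√(a * b) * (t + t⁻¹))) := by
        rw [← integral_const_mul, ← integral_const_mul]
        refine setIntegral_congr_fun measurableSet_Ioi fun t (ht : 0 < t) => ?_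
        have exponent : a * (c * t) + b / (c * t) = √(a * b) * (t + t⁻¹) := by
          rw [← mul_assoc, mul_scale, ← div_div, div_scale]
          ring
        simp only [exponent, mul_rpow scale_pos.le ht.le, rpow_sub_one scale_pos.ne']
        field_simp
    _ = 2 * (b / a) ^ (ν / 2) * realBesselK ν (2 * √(a * b)) := by
        rw [integral_rpow_mul_exp_neg_add_inv ν (sqrt_pos.2 (mul_pos ha hb)), scale_rpow]
        ring

lemma measureReal_mconv_Ioi {μ ν : Measure ℝ} [IsFiniteMeasure ν] (hμ : ∀ᵐ t ∂μ, 0 < t)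
    (R : ℝ) : (μ ∗ₘ ν).real (Ioi R) = ∫ t, ν.real (Ioi (R / t)) ∂μ := by
  have tail_antitone : Antitone fun x => ν (Ioi x) := fun _ _ h => measure_mono (Ioi_subset_Ioi h)
  have tail_measurable : Measurable fun t => ν (Ioi (R / t)) :=
    tail_antitone.measurable.comp (by fun_prop)
  have measure_eq : (μ ∗ₘ ν) (Ioi R) = ∫⁻ t, ν (Ioi (R / t)) ∂μ := by
    rw [← lintegral_indicator_one measurableSet_Ioi,
      Measure.lintegral_mconv (measurable_one.indicator measurableSet_Ioi)]
    refine lintegral_congr_ae (hμ.mono fun t ht => ?_)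
    have section_eq : (fun e => t * e) ⁻¹' Ioi R = Ioi (R / t) := by
      ext e
      exact (div_lt_iff₀' ht).symm
    beta_reduce
    rw [← section_eq, ← lintegral_indicator_one (measurableSet_Ioi.preimage (by fun_prop))]
    rfl
  rw [measureReal_def, measure_eq,
    ← integral_toReal tail_measurable.aemeasurable (.of_forall fun _ => measure_lt_top _ _)]
  rfl

lemma expMeasure_real_Ioi {r x : ℝ} (hr : 0 < r) (hx : 0 ≤ x) :
    (expMeasure r).real (Ioi x) = exp (-(r * x)) := by
  have := isProbabilityMeasure_expMeasure hr
  rw [← compl_Iic, probReal_compl_eq_one_sub measurableSet_Iic, ← cdf_eq_real,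
    cdf_expMeasure_eq hr, if_pos hx, sub_sub_cancel]

lemma ae_pos_gammaMeasure (a b : ℝ) : ∀ᵐ t ∂gammaMeasure a b, 0 < t := by
  have ne_zero : ∀ᵐ t ∂gammaMeasure a b, t ≠ 0 :=
    (withDensity_absolutelyContinuous volume (gammaPDF a b)).ae_le (Measure.ae_ne volume 0)
  have nonneg : ∀ᵐ t ∂gammaMeasure a b, 0 ≤ t := by
    refine (ae_withDensity_iff (by unfold gammaPDF; fun_prop)).2 (.of_forall fun t ht => ?_)
    by_contra! h
    exact ht (gammaPDF_of_neg h)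
  filter_upwards [ne_zero, nonneg] with t h₀ h using h.lt_of_ne' h₀

lemma integral_gammaMeasure {F : Type*} [NormedAddCommGroup F] [NormedSpace ℝ F] {a b : ℝ}
    (ha : 0 < a) (hb : 0 < b) (f : ℝ → F) :
    ∫ t, f t ∂gammaMeasure a b =
      (b ^ a / Gamma a) • ∫ t in Ioi 0, (t ^ (a - 1) * exp (-(b * t))) • f t := by
  have density_lt_top : ∀ᵐ t, gammaPDF a b t < ⊤ := .of_forall fun _ => ENNReal.ofReal_lt_top
  rw [gammaMeasure, integral_withDensity_eq_integral_toReal_smul (by unfold gammaPDF; fun_prop)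
    density_lt_top, ← integral_smul, ← integral_Ici_eq_integral_Ioi,
    ← integral_indicator measurableSet_Ici]
  refine integral_congr_ae (.of_forall fun t => ?_)
  have toReal_density : (gammaPDF a b t).toReal = gammaPDFReal a b t :=
    ENNReal.toReal_ofReal (gammaPDFReal_nonneg ha hb t)
  simp only [toReal_density, gammaPDFReal, indicator, mem_Ici, ite_smul, zero_smul, smul_smul,
    mul_assoc]

lemma gammaMeasure_mconv_expMeasure_real_Ioi {a b r R : ℝ} (ha : 0 < a) (hb : 0 < b)
    (hr : 0 < r) (hR : 0 < R) :
    (gammaMeasure a b ∗ₘ expMeasure r).real (Ioi R) =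
      2 / Gamma a * (b * r * R) ^ (a / 2) * realBesselK a (2 * √(b * r * R)) := by
  have := isProbabilityMeasure_expMeasure hr
  have hrR : 0 < r * R := mul_pos hr hR
  have rpow_split : b ^ a * (r * R / b) ^ (a / 2) = (b * (r * R)) ^ (a / 2) := by
    rw [← add_halves a, rpow_add hb, add_halves, mul_assoc, ← mul_rpow hb.le (by positivity),
      mul_div_cancel₀ _ hb.ne', ← mul_rpow hb.le hrR.le]
  calc (gammaMeasure a b ∗ₘ expMeasure r).real (Ioi R)
      = ∫ t, exp (-(r * (R / t))) ∂gammaMeasure a b := by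
        rw [measureReal_mconv_Ioi (ae_pos_gammaMeasure a b)]
        exact integral_congr_ae ((ae_pos_gammaMeasure a b).mono fun t ht =>
          expMeasure_real_Ioi hr (div_nonneg hR.le ht.le))
    _ = b ^ a / Gamma a * ∫ t in Ioi 0, t ^ (a - 1) * exp (-(b * t + r * R / t)) := by
        simp only [integral_gammaMeasure ha hb, smul_eq_mul, mul_assoc, ← exp_add, neg_add,
          mul_div_assoc]
    _ = b ^ a * (r * R / b) ^ (a / 2) * (2 / Gamma a) * realBesselK a (2 * √(b * (r * R))) := by
        rw [integral_rpow_mul_exp_neg_add_div a hb hrR]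
        ring
    _ = 2 / Gamma a * (b * r * R) ^ (a / 2) * realBesselK a (2 * √(b * r * R)) := by
        rw [rpow_split, ← mul_assoc b r R, mul_comm (2 / Gamma a)]

lemma Gamma_natCast_eq_factorial_pred {m : ℕ} (hm : 1 ≤ m) : Gamma m = (m - 1).factorial := by
  rw [← Gamma_nat_eq_factorial, Nat.cast_pred hm, sub_add_cancel]

lemma gammaScaleMeasure_eq_gammaMeasure {m : ℕ} (hm : 1 ≤ m) (lam : ℝ) :
    gammaScaleMeasure m lam = gammaMeasure m lam⁻¹ := by
  refine congrArg volume.withDensity (funext fun t => ?_)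
  rw [gammaPDF_eq, Gamma_natCast_eq_factorial_pred hm, ← Nat.cast_pred hm, rpow_natCast,
    rpow_natCast, inv_pow, ← div_eq_inv_mul, ← neg_div]
  congr 2
  ring

lemma expDist_eq_expMeasure (r : ℝ) : expDist r = expMeasure r :=
  congrArg volume.withDensity (funext fun t => (exponentialPDF_eq r t).symm)

theorem gamma_times_exp_cdf_general {a b r R : ℝ} (ha : 0 < a) (hb : 0 < b) (hr : 0 < r)
    (hR : 0 < R) {Ω : Type*} [MeasurableSpace Ω] {P : Measure Ω} {T E : Ω → ℝ}
    (hT : HasLaw T (gammaMeasure a b) P) (hE : HasLaw E (expMeasure r) P)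
    (hindep : IndepFun T E P) :
    P.real {ω | T ω * E ω ≤ R} =
      1 - 2 / Gamma a * (b * r * R) ^ (a / 2) * realBesselK a (2 * √(b * r * R)) := by
  have := isProbabilityMeasure_gammaMeasure ha hb
  have := isProbabilityMeasure_expMeasure hr
  rw [(hindep.hasLaw_fun_mul hT hE).measureReal_eq (p := (· ≤ R)) measurableSet_Iic,
    ← gammaMeasure_mconv_expMeasure_real_Ioi ha hb hr hR,
    ← probReal_compl_eq_one_sub measurableSet_Ioi, compl_Ioi]
  rfl

/-- Exact outage probability of the equal-eigenvalue case: if `T ∼ Gamma(m, λ)` and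
`E ∼ Exp(1)` are independent, then for every `R > 0`,
`P(T·E ≤ R) = 1 − (2/(m−1)!)·(R/λ)^{m/2}·K(m, 2·√(R/λ))`. -/
theorem gamma_times_exp_cdf (m : ℕ) (hm : 1 ≤ m) (lam : ℝ) (hlam : 0 < lam)
    {Ω : Type*} [MeasurableSpace Ω] (P : Measure Ω) [IsProbabilityMeasure P]
    (T E : Ω → ℝ) (hTmeas : Measurable T) (hEmeas : Measurable E)
    (hindep : IndepFun T E P)
    (hTlaw : Measure.map T P = gammaScaleMeasure m lam)
    (hElaw : Measure.map E P = expDist 1)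
    (R : ℝ) (hR : 0 < R) :
    (P {ω | T ω * E ω ≤ R}).toReal =
      1 - 2 / (Nat.factorial (m - 1) : ℝ) * (R / lam) ^ ((m : ℝ) / 2) *
        besselK m (2 * Real.sqrt (R / lam)) := by
  simpa only [Gamma_natCast_eq_factorial_pred hm, mul_one, ← div_eq_inv_mul,
    besselK_eq_realBesselK, measureReal_def] using
    gamma_times_exp_cdf_general (Nat.cast_pos.2 hm) (inv_pos.2 hlam) one_pos hR
      ⟨hTmeas.aemeasurable, hTlaw.trans (gammaScaleMeasure_eq_gammaMeasure hm lam)⟩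
      ⟨hEmeas.aemeasurable, hElaw.trans (expDist_eq_expMeasure 1)⟩ hindep
end

section
/- For every real λ > 0, lim_{g → 0⁺} [1 − 2·√(g/λ)·K(1, 2·√(g/λ))] / (−(g/λ)·ln(g/λ)) = 1. -/
open MeasureTheory Real Set Filter Topology

/-! Integrating the derivative of `tanh t * (1 - exp (-(x * cosh t)))` over `(0, ∞)` gives
`1 - x * K₁(x) = x² ∫₀^∞ φ(x cosh t) dt` with `φ z = (1 - (1 + z) e^{-z}) / z²`.

For any `φ` with `φ z = a + O(z)` near `0` and `φ z = O(1 / z)` near `∞`, the integral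
`∫₀^∞ φ(x cosh t) dt` is `a log (2 / x) + O(1)`: up to the point `T = log (2 / x)`, where `x cosh t`
becomes of order one, the integrand is close to `a`, and beyond `T` it decays like `e^{T - t}`.
Here `a = 1/2`, so `1 - x * K₁(x) = (x² / 2) log (2 / x) + O(x²)`, and `x = 2 √(g / lam)`. -/

section Log

lemma tendsto_log_const_div_nhdsGT_zero {c : ℝ} (hc : 0 < c) :
    Tendsto (fun x => log (c / x)) (𝓝[>] 0) atTop :=
  tendsto_log_atTop.comp (tendsto_inv_nhdsGT_zero.const_mul_atTop hc)

lemma sq_div_two_mul_log_two_div_two_mul_sqrt {u : ℝ} (hu : 0 < u) :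
    (2 * √u) ^ 2 / 2 * log (2 / (2 * √u)) = -u * log u := by
  have hdiv : 2 / (2 * √u) = (√u)⁻¹ := by field_simp
  rw [hdiv, log_inv, log_sqrt hu.le, mul_pow, sq_sqrt hu.le]
  ring

end Log

section Hyperbolic

lemma exp_le_two_mul_cosh (t : ℝ) : exp t ≤ 2 * cosh t := by
  linarith [Real.cosh_eq t, exp_pos (-t)]

lemma two_mul_sinh_le_exp (t : ℝ) : 2 * sinh t ≤ exp t := by
  linarith [Real.sinh_eq t, exp_pos (-t)]

lemma hasDerivAt_tanh (t : ℝ) : HasDerivAt tanh (1 / cosh t ^ 2) t := by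
  have hquot : HasDerivAt (fun s => sinh s / cosh s)
      ((cosh t * cosh t - sinh t * sinh t) / cosh t ^ 2) t :=
    (Real.hasDerivAt_sinh t).div (Real.hasDerivAt_cosh t) (Real.cosh_pos t).ne'
  simp only [← Real.tanh_eq_sinh_div_cosh] at hquot
  convert hquot using 2
  linarith [Real.cosh_sq_sub_sinh_sq t]

lemma tendsto_tanh_atTop : Tendsto tanh atTop (𝓝 1) := by
  have hlower : Tendsto (fun t : ℝ => 1 - exp (-t)) atTop (𝓝 1) := by
    simpa using tendsto_exp_neg_atTop_nhds_zero.const_sub 1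
  refine tendsto_of_tendsto_of_tendsto_of_le_of_le hlower tendsto_const_nhds
    (fun t => ?_) (fun t => (Real.tanh_lt_one t).le)
  rw [Real.tanh_eq_sinh_div_cosh, le_div_iff₀ (Real.cosh_pos t), ← Real.cosh_sub_sinh t]
  nlinarith [Real.one_le_cosh t, Real.sinh_lt_cosh t]

lemma tendsto_cosh_atTop : Tendsto cosh atTop atTop :=
  tendsto_atTop_mono (fun t => by linarith [exp_le_two_mul_cosh t])
    (tendsto_exp_atTop.atTop_div_const two_pos)

end Hyperbolic

section CoshIntegral

variable {E : Type*} [NormedAddCommGroup E] {φ : ℝ → E} {a : E} {A B x T : ℝ}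

lemma norm_comp_mul_cosh_le (hB : ∀ z > 0, ‖φ z‖ ≤ B / z) (hx : 0 < x) (t : ℝ) :
    ‖φ (x * cosh t)‖ ≤ 2 * B / x * exp (-t) := by
  have hB₀ : 0 ≤ B := (norm_nonneg _).trans (by simpa using hB 1 one_pos)
  have hcosh : 0 < x * cosh t := mul_pos hx (Real.cosh_pos t)
  calc ‖φ (x * cosh t)‖ ≤ B / (x * cosh t) := hB _ hcosh
    _ ≤ B / (x * (exp t / 2)) := by
        gcongr
        linarith [exp_le_two_mul_cosh t]
    _ = 2 * B / x * exp (-t) := by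
        rw [exp_neg]
        field_simp

lemma integrableOn_comp_mul_cosh (hφ : StronglyMeasurable φ) (hB : ∀ z > 0, ‖φ z‖ ≤ B / z)
    (hx : 0 < x) : IntegrableOn (fun t => φ (x * cosh t)) (Ioi T) :=
  ((integrableOn_exp_neg_Ioi T).const_mul (2 * B / x)).mono'
    (hφ.comp_measurable (by fun_prop)).aestronglyMeasurable
    (ae_of_all _ (norm_comp_mul_cosh_le hB hx))

variable [NormedSpace ℝ E]

lemma norm_integral_Ioi_comp_mul_cosh_le (hB : ∀ z > 0, ‖φ z‖ ≤ B / z) (hx : 0 < x) :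
    ‖∫ t in Ioi T, φ (x * cosh t)‖ ≤ 2 * B / x * exp (-T) := by
  rw [← integral_exp_neg_Ioi T, ← integral_const_mul]
  exact norm_integral_le_of_norm_le ((integrableOn_exp_neg_Ioi T).const_mul _)
    (ae_of_all _ (norm_comp_mul_cosh_le hB hx))

lemma norm_integral_comp_mul_cosh_sub_const_le (hA : ∀ z > 0, ‖φ z - a‖ ≤ A * z) (hx : 0 < x)
    (hT : 0 ≤ T) : ‖∫ t in (0)..T, (φ (x * cosh t) - a)‖ ≤ A * x * sinh T := by
  have hcosh : ∫ t in (0)..T, A * x * cosh t = A * x * sinh T := by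
    rw [intervalIntegral.integral_const_mul, intervalIntegral.integral_eq_sub_of_hasDerivAt
      (fun t _ => Real.hasDerivAt_sinh t) (Real.continuous_cosh.intervalIntegrable _ _),
      Real.sinh_zero, sub_zero]
  rw [← hcosh]
  refine intervalIntegral.norm_integral_le_of_norm_le hT (ae_of_all _ fun t _ => ?_)
    (Continuous.intervalIntegrable (by fun_prop) _ _)
  rw [mul_assoc]
  exact hA _ (mul_pos hx (Real.cosh_pos t))

lemma norm_integral_comp_mul_cosh_sub_log_smul_le [CompleteSpace E] (hφ : StronglyMeasurable φ)
    (hA : ∀ z > 0, ‖φ z - a‖ ≤ A * z) (hB : ∀ z > 0, ‖φ z‖ ≤ B / z) (hx : 0 < x) (hx₂ : x ≤ 2) :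
    ‖(∫ t in Ioi 0, φ (x * cosh t)) - log (2 / x) • a‖ ≤ A + B := by
  set T := log (2 / x)
  have hT : 0 ≤ T := log_nonneg (by rwa [one_le_div hx])
  have hexpT : exp T = 2 / x := exp_log (by positivity)
  have hA₀ : 0 ≤ A := (norm_nonneg _).trans (by simpa using hA 1 one_pos)
  have hint (c : ℝ) : IntegrableOn (fun t => φ (x * cosh t)) (Ioi c) :=
    integrableOn_comp_mul_cosh hφ hB hx
  have hint₀ : IntervalIntegrable (fun t => φ (x * cosh t)) volume 0 T :=
    (intervalIntegrable_iff_integrableOn_Ioc_of_le hT).2 ((hint 0).mono_set Ioc_subset_Ioi_self)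
  have hsplit : (∫ t in Ioi 0, φ (x * cosh t)) - T • a =
      (∫ t in (0)..T, (φ (x * cosh t) - a)) + ∫ t in Ioi T, φ (x * cosh t) := by
    rw [← intervalIntegral.integral_interval_add_Ioi (hint 0) (hint T),
      intervalIntegral.integral_sub hint₀ intervalIntegrable_const,
      intervalIntegral.integral_const, sub_zero]
    abel
  have hhead : A * x * sinh T ≤ A :=
    calc A * x * sinh T ≤ A * x * (exp T / 2) := by
          gcongr
          linarith [two_mul_sinh_le_exp T]
      _ = A := by
          rw [hexpT]
          field_simp
  have htail : 2 * B / x * exp (-T) = B := by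
    rw [exp_neg, hexpT]
    field_simp
  rw [hsplit]
  exact norm_add_le_of_le ((norm_integral_comp_mul_cosh_sub_const_le hA hx hT).trans hhead)
    ((norm_integral_Ioi_comp_mul_cosh_le hB hx).trans_eq htail)

end CoshIntegral

/-- `γ(2, z) / z²`, where `γ(2, z) = ∫₀ᶻ s e^{-s} ds = 1 - (1 + z) e^{-z}` is the lower incomplete
gamma function. It is only evaluated at `z > 0`: the value at `0` is `0` instead of the limit
`1 / 2`. -/
noncomputable def scaledLowerGamma (z : ℝ) : ℝ := (1 - (1 + z) * exp (-z)) / z ^ 2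

section ScaledLowerGamma

variable {z : ℝ}

lemma stronglyMeasurable_scaledLowerGamma : StronglyMeasurable scaledLowerGamma := by
  unfold scaledLowerGamma
  exact Measurable.stronglyMeasurable (by fun_prop)

lemma one_add_mul_exp_neg_le_one (z : ℝ) : (1 + z) * exp (-z) ≤ 1 := by
  calc (1 + z) * exp (-z) ≤ exp z * exp (-z) := by
        gcongr
        linarith [add_one_le_exp z]
    _ = 1 := by rw [← exp_add, add_neg_cancel, exp_zero]

lemma one_sub_sq_div_two_le_one_add_mul_exp_neg (hz : 0 ≤ z) :
    1 - z ^ 2 / 2 ≤ (1 + z) * exp (-z) := by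
  have hderiv (s : ℝ) : HasDerivAt (fun s => (1 + s) * exp (-s) + s ^ 2 / 2)
      (s * (1 - exp (-s))) s := by
    have hexp : HasDerivAt (fun s : ℝ => exp (-s)) (-exp (-s)) s := by
      simpa using (hasDerivAt_neg s).exp
    refine ((((hasDerivAt_id' s).const_add 1).fun_mul hexp).fun_add
      (((hasDerivAt_id' s).fun_pow 2).div_const 2)).congr_deriv ?_
    push_cast
    ring
  have hmono : MonotoneOn (fun s : ℝ => (1 + s) * exp (-s) + s ^ 2 / 2) (Ici 0) :=
    monotoneOn_of_hasDerivWithinAt_nonneg (convex_Ici 0)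
      (fun s _ => (hderiv s).continuousAt.continuousWithinAt)
      (fun s _ => (hderiv s).hasDerivWithinAt) fun s hs => by
        have hs₀ : 0 ≤ s := interior_subset hs
        exact mul_nonneg hs₀ (sub_nonneg.2 (exp_le_one_iff.2 (neg_nonpos.2 hs₀)))
  have hle := hmono self_mem_Ici hz hz
  simp only [neg_zero, exp_zero] at hle
  linarith

lemma scaledLowerGamma_nonneg (z : ℝ) : 0 ≤ scaledLowerGamma z :=
  div_nonneg (sub_nonneg.2 (one_add_mul_exp_neg_le_one z)) (sq_nonneg z)

lemma scaledLowerGamma_le_half (hz : 0 < z) : scaledLowerGamma z ≤ 1 / 2 := by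
  rw [scaledLowerGamma, div_le_iff₀ (by positivity)]
  linarith [one_sub_sq_div_two_le_one_add_mul_exp_neg hz.le]

lemma half_mul_one_sub_le_scaledLowerGamma (hz : 0 < z) : 1 / 2 * (1 - z) ≤ scaledLowerGamma z := by
  rw [scaledLowerGamma, le_div_iff₀ (by positivity)]
  calc 1 / 2 * (1 - z) * z ^ 2 ≤ 1 / 2 * exp (-z) * z ^ 2 := by
        gcongr
        exact one_sub_le_exp_neg z
    _ = (1 + z + z ^ 2 / 2) * exp (-z) - (1 + z) * exp (-z) := by ring
    _ ≤ exp z * exp (-z) - (1 + z) * exp (-z) := by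
        gcongr
        exact quadratic_le_exp_of_nonneg hz.le
    _ = 1 - (1 + z) * exp (-z) := by rw [← exp_add, add_neg_cancel, exp_zero]

lemma norm_scaledLowerGamma_sub_half_le (hz : 0 < z) :
    ‖scaledLowerGamma z - 1 / 2‖ ≤ 1 / 2 * z := by
  rw [norm_eq_abs, abs_le]
  constructor <;>
    linarith [scaledLowerGamma_le_half hz, half_mul_one_sub_le_scaledLowerGamma hz]

lemma norm_scaledLowerGamma_le_one_div (hz : 0 < z) : ‖scaledLowerGamma z‖ ≤ 1 / z := by
  rw [norm_of_nonneg (scaledLowerGamma_nonneg z), scaledLowerGamma,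
    div_le_div_iff₀ (by positivity) hz]
  have hle : 1 - (1 + z) * exp (-z) ≤ z := by
    nlinarith [one_sub_le_exp_neg z, exp_pos (-z)]
  nlinarith

end ScaledLowerGamma

section BesselKOne

open Asymptotics

variable {x : ℝ}

lemma besselK_one (x : ℝ) :
    besselK 1 x = ∫ t in Ioi (0 : ℝ), exp (-(x * cosh t)) * cosh t := by
  simp only [besselK, Nat.cast_one, one_mul]

lemma hasDerivAt_tanh_mul_one_sub_exp_neg_mul_cosh (hx : x ≠ 0) (t : ℝ) :
    HasDerivAt (fun t => tanh t * (1 - exp (-(x * cosh t))))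
      (x ^ 2 * scaledLowerGamma (x * cosh t) + x * (exp (-(x * cosh t)) * cosh t)) t := by
  have hexp : HasDerivAt (fun t => 1 - exp (-(x * cosh t)))
      (x * sinh t * exp (-(x * cosh t))) t := by
    refine (((Real.hasDerivAt_cosh t).const_mul x).fun_neg.exp.const_sub 1).congr_deriv ?_
    ring
  refine ((hasDerivAt_tanh t).fun_mul hexp).congr_deriv ?_
  have hcosh := (Real.cosh_pos t).ne'
  rw [scaledLowerGamma, Real.tanh_eq_sinh_div_cosh]
  field_simp
  rw [Real.sinh_sq]
  ring

lemma tendsto_tanh_mul_one_sub_exp_neg_mul_cosh (hx : 0 < x) :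
    Tendsto (fun t => tanh t * (1 - exp (-(x * cosh t)))) atTop (𝓝 1) := by
  have hexp : Tendsto (fun t => exp (-(x * cosh t))) atTop (𝓝 0) :=
    tendsto_exp_neg_atTop_nhds_zero.comp (tendsto_cosh_atTop.const_mul_atTop hx)
  simpa using tendsto_tanh_atTop.mul (hexp.const_sub 1)

lemma one_sub_mul_besselK_one (hx : 0 < x) :
    1 - x * besselK 1 x = x ^ 2 * ∫ t in Ioi 0, scaledLowerGamma (x * cosh t) := by
  have hγ : IntegrableOn (fun t => x ^ 2 * scaledLowerGamma (x * cosh t)) (Ioi 0) :=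
    (integrableOn_comp_mul_cosh stronglyMeasurable_scaledLowerGamma
      (fun _ => norm_scaledLowerGamma_le_one_div) hx).const_mul _
  have hderiv (t : ℝ) := hasDerivAt_tanh_mul_one_sub_exp_neg_mul_cosh hx.ne' t
  have hnonneg : ∀ t ∈ Ioi (0 : ℝ),
      0 ≤ x ^ 2 * scaledLowerGamma (x * cosh t) + x * (exp (-(x * cosh t)) * cosh t) := by
    intro t _
    have hγ₀ := scaledLowerGamma_nonneg (x * cosh t)
    have := Real.cosh_pos t
    positivity
  have hlim := tendsto_tanh_mul_one_sub_exp_neg_mul_cosh hx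
  have hK : IntegrableOn (fun t => x * (exp (-(x * cosh t)) * cosh t)) (Ioi 0) := by
    refine ((integrableOn_Ioi_deriv_of_nonneg' (fun t _ => hderiv t) hnonneg hlim).sub
      hγ).congr_fun (fun t _ => ?_) measurableSet_Ioi
    simp only [Pi.sub_apply, add_sub_cancel_left]
  have htotal := integral_Ioi_of_hasDerivAt_of_nonneg' (fun t _ => hderiv t) hnonneg hlim
  rw [integral_add hγ hK, integral_const_mul, integral_const_mul, ← besselK_one, Real.tanh_zero,
    zero_mul, sub_zero] at htotal
  linarith

lemma abs_one_sub_mul_besselK_one_sub_le (hx : 0 < x) (hx₂ : x ≤ 2) :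
    |1 - x * besselK 1 x - x ^ 2 / 2 * log (2 / x)| ≤ 3 / 2 * x ^ 2 := by
  have hlog : |(∫ t in Ioi 0, scaledLowerGamma (x * cosh t)) - log (2 / x) * (1 / 2)| ≤
      1 / 2 + 1 :=
    norm_integral_comp_mul_cosh_sub_log_smul_le stronglyMeasurable_scaledLowerGamma
      (fun _ => norm_scaledLowerGamma_sub_half_le) (fun _ => norm_scaledLowerGamma_le_one_div)
      hx hx₂
  calc |1 - x * besselK 1 x - x ^ 2 / 2 * log (2 / x)|
      = |x ^ 2 * ((∫ t in Ioi 0, scaledLowerGamma (x * cosh t)) - log (2 / x) * (1 / 2))| := by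
        rw [one_sub_mul_besselK_one hx]
        ring_nf
    _ = x ^ 2 * |(∫ t in Ioi 0, scaledLowerGamma (x * cosh t)) - log (2 / x) * (1 / 2)| := by
        rw [abs_mul, abs_of_nonneg (sq_nonneg x)]
    _ ≤ x ^ 2 * (1 / 2 + 1) := by gcongr
    _ = 3 / 2 * x ^ 2 := by ring

lemma one_sub_mul_besselK_one_isEquivalent :
    (fun x => 1 - x * besselK 1 x) ~[𝓝[>] 0] fun x => x ^ 2 / 2 * log (2 / x) := by
  have hbigO : (fun x => 1 - x * besselK 1 x - x ^ 2 / 2 * log (2 / x)) =O[𝓝[>] 0]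
      fun x : ℝ => x ^ 2 / 2 * 1 := by
    refine IsBigO.of_bound 3 ?_
    filter_upwards [Ioc_mem_nhdsGT two_pos] with x hx
    rw [norm_eq_abs, norm_of_nonneg (by positivity)]
    linarith [abs_one_sub_mul_besselK_one_sub_le hx.1 hx.2]
  have hlittleO : (fun _ => (1 : ℝ)) =o[𝓝[>] 0] fun x => log (2 / x) :=
    (isLittleO_const_left_of_ne one_ne_zero).2
      (tendsto_norm_atTop_atTop.comp (tendsto_log_const_div_nhdsGT_zero two_pos))
  exact hbigO.trans_isLittleO ((isBigO_refl _ _).mul_isLittleO hlittleO)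

lemma tendsto_one_sub_mul_besselK_one_div :
    Tendsto (fun x => (1 - x * besselK 1 x) / (x ^ 2 / 2 * log (2 / x))) (𝓝[>] 0) (𝓝 1) := by
  refine (isEquivalent_iff_tendsto_one ?_).1 one_sub_mul_besselK_one_isEquivalent
  filter_upwards [Ioo_mem_nhdsGT two_pos] with x hx
  have hlog : 0 < log (2 / x) := log_pos ((one_lt_div hx.1).2 hx.2)
  have hx₀ := hx.1
  positivity

end BesselKOne

/-- High-SNR asymptotic of the shape-1 K-distribution CDF:
`[1 − 2·√(g/λ)·K(1, 2·√(g/λ))] / (−(g/λ)·ln(g/λ)) → 1` as `g → 0⁺`. -/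
theorem K1_cdf_asymptotic (lam : ℝ) (hlam : 0 < lam) :
    Filter.Tendsto
      (fun g : ℝ =>
        (1 - 2 * Real.sqrt (g / lam) * besselK 1 (2 * Real.sqrt (g / lam))) /
          (-(g / lam) * Real.log (g / lam)))
      (nhdsWithin 0 (Set.Ioi 0)) (nhds 1) := by
  have hsqrt : Tendsto (fun g => 2 * √(g / lam)) (𝓝[>] 0) (𝓝[>] 0) := by
    refine tendsto_nhdsWithin_iff.2 ⟨?_, ?_⟩
    · have hcont : Continuous fun g => 2 * √(g / lam) := by fun_prop
      simpa using (hcont.tendsto 0).mono_left nhdsWithin_le_nhds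
    · filter_upwards [self_mem_nhdsWithin] with g (hg : 0 < g)
      exact mem_Ioi.2 (by positivity)
  refine (tendsto_one_sub_mul_besselK_one_div.comp hsqrt).congr' ?_
  filter_upwards [self_mem_nhdsWithin] with g (hg : 0 < g)
  rw [Function.comp_apply, sq_div_two_mul_log_two_div_two_mul_sqrt (div_pos hg hlam)]
end
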